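/- Consider the hashing scheme HashScheme(U, k): f is chosen u.a.r. from a ⌈12 ln k⌉-wise independent family from U to {0,…,d₁−1} (d₁ the smallest power of 2 with k/ln k ≤ d₁), and h₁,…,h_{d₂} are chosen independently u.a.r. from a universal family from U to {0,…,d₃−1} with d₂ = ⌈8 ln k⌉ and d₃ = ⌈13 ln k⌉². Define hᵢ⁺(x) = f(x)·d₂d₃ + (i−1)·d₃ + hᵢ(x), and for q ∈ {0,…,d₁d₂d₃−1} let H⁺_inv(q) = {x ∈ U : hᵢ⁺(x) = q for some i}. Then for any S ⊆ U with |S| = k ≥ 2, with probability at least 1 − 4/(k³ ln k), there exist k values q₁,…,q_k such that the sets H⁺_inv(q₁),…,H⁺_inv(q_k) are pairwise disjoint and each contains exactly one element of S. -/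

import Mathlib

open Finset
open scoped Classical

/-- The combined hash functions `hᵢ⁺(x) = f(x)·d₂d₃ + i·d₃ + hᵢ(x)` of HashScheme
(`i` is 0-indexed here). -/
def hashPlus {U : Type*} (d₂ d₃ : ℕ) {d₁ : ℕ} (f : U → Fin d₁)
    (h : Fin d₂ → U → Fin d₃) (i : Fin d₂) (x : U) : ℕ :=
  (f x : ℕ) * (d₂ * d₃) + (i : ℕ) * d₃ + (h i x : ℕ)

/-!
Call the elements of `S` with a common value under `f` a bucket, and let `j = ⌈4 ln k⌉`,
`m = ⌈13 ln k⌉`. By `j`-wise independence the expected number of `j`-subsets of `S` inside a given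
bucket is `C(k, j) / d₁ ^ j`, whereas a bucket of size at least `m` contains at least `C(m, j)`
of them. Since `m + 1 - j ≥ 9 ln k ≥ 9 k / d₁`, Markov's inequality shows that a bucket is that
large with probability at most `(k / (d₁ (m + 1 - j))) ^ j ≤ 9 ^ (-j) ≤ k⁻⁴`.
On a smaller bucket each `hᵢ` is injective with probability at least `1 / 2`, so all `d₂` of them
fail with probability at most `2 ^ (-d₂) ≤ k⁻⁴`. A union bound over the `d₁ ≤ 2 k / ln k` buckets
yields an index `c a` for every bucket `a` with `h (c a)` injective on it, except with probability
`4 / (k³ ln k)`. Since `hᵢ⁺(x)` encodes the triple `(f x, i, hᵢ x)`, the values `h⁺` at `x ∈ S`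
with index `c (f x)` then have disjoint preimages, each meeting `S` only in `x`.
-/

section Counting

variable {A B : Type*} [Fintype A] [Fintype B]

theorem card_filter_mul_le_sum {p : A → Prop} [DecidablePred p] {f : A → ℕ} {c : ℕ}
    (h : ∀ a, p a → c ≤ f a) : #{a | p a} * c ≤ ∑ a, f a := by
  rw [← smul_eq_mul]
  exact (card_nsmul_le_sum _ f c fun a ha => h a (mem_filter_univ a |>.1 ha)).trans
    (sum_le_sum_of_subset (filter_subset _ _))

theorem card_filter_exists_mul_le {p : B → A → Prop} [∀ b, DecidablePred (p b)]
    [DecidablePred fun a => ∃ b, p b a] {K N : ℕ}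
    (h : ∀ b, #{a | p b a} * K ≤ N) : #{a | ∃ b, p b a} * K ≤ Fintype.card B * N := by
  calc #{a | ∃ b, p b a} * K ≤ (∑ b, #{a | p b a}) * K := by
        gcongr
        refine (card_le_card fun a ha => ?_).trans card_biUnion_le
        simpa using ha
    _ = ∑ b, #{a | p b a} * K := sum_mul ..
    _ ≤ Fintype.card B * N := by
        simpa using sum_le_card_nsmul univ _ N fun b _ => h b

theorem card_filter_prod_mul_le {p : A → B → Prop} [∀ a, DecidablePred (p a)] {K : ℕ}
    (h : ∀ a, #{b | p a b} * K ≤ Fintype.card B) :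
    #{ω : A × B | p ω.1 ω.2} * K ≤ Fintype.card (A × B) := by
  calc #{ω : A × B | p ω.1 ω.2} * K = ∑ a, #{b | p a b} * K := by
        simp only [card_filter, Fintype.sum_prod_type, sum_mul]
    _ ≤ Fintype.card (A × B) := by
        simpa [Fintype.card_prod] using sum_le_card_nsmul univ _ _ fun a _ => h a

theorem card_filter_fst_mul_le {p : A → Prop} [DecidablePred p] {K : ℕ}
    (h : #{a | p a} * K ≤ Fintype.card A) :
    #{ω : A × B | p ω.1} * K ≤ Fintype.card (A × B) := by
  have hprod : ({ω : A × B | p ω.1} : Finset (A × B)) =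
      ({a | p a} : Finset A) ×ˢ univ := by
    ext; simp
  rw [hprod, card_product, card_univ, mul_right_comm, Fintype.card_prod]
  exact Nat.mul_le_mul_right _ h

theorem card_filter_forall_apply (p : A → Prop) [DecidablePred p] (n : ℕ) :
    #{g : Fin n → A | ∀ t, p (g t)} = #{a | p a} ^ n := by
  have hpi : ({g : Fin n → A | ∀ t, p (g t)} : Finset (Fin n → A)) =
      Fintype.piFinset fun _ => {a | p a} := by
    ext; simp
  rw [hpi, Fintype.card_piFinset_const]

end Counting

section Estimates

theorem pow_le_pow_of_mul_log_le {x b : ℝ} (hx : 0 < x) (hb : 0 < b) {m n : ℕ}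
    (h : m * Real.log x ≤ n * Real.log b) : x ^ m ≤ b ^ n := by
  rwa [← Real.log_le_log_iff (pow_pos hx m) (pow_pos hb n), Real.log_pow, Real.log_pow]

theorem pow_le_descFactorial {x : ℝ} (hx : 0 ≤ x) {t j : ℕ} (h : x + j ≤ t + 1) :
    x ^ j ≤ t.descFactorial j := by
  have hj : j ≤ t + 1 := by
    have : (j : ℝ) ≤ t + 1 := by linarith
    exact_mod_cast this
  calc x ^ j ≤ ((t + 1 - j : ℕ) : ℝ) ^ j := by
        gcongr
        push_cast [Nat.cast_sub hj]
        linarith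
    _ ≤ t.descFactorial j := by exact_mod_cast Nat.pow_sub_le_descFactorial t j

theorem two_pow_le_two_mul {x : ℝ} (hx : 1 ≤ x) {d : ℕ}
    (hmin : ∀ d' < d, (2 : ℝ) ^ d' < x) : (2 : ℝ) ^ d ≤ 2 * x := by
  cases d with
  | zero => linarith
  | succ d => linarith [hmin d d.lt_succ_self, pow_succ (2 : ℝ) d]

theorem one_le_div_log {x : ℝ} (hx : 1 < x) : 1 ≤ x / Real.log x :=
  (one_le_div (Real.log_pos hx)).2 (Real.log_le_self (by linarith))

end Estimates

section HashFamilies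

variable {U ι α : Type*} [Fintype ι] [Fintype α] [DecidableEq α]

/-- A family `F` of functions, indexed with multiplicity by `ι`, is `κ`-wise independent: for a
uniformly random index, the values at any at most `κ` distinct points are independent and uniform
on `α`. Probabilities are cleared of denominators. -/
def IsKWiseIndependent (κ : ℕ) (F : ι → U → α) : Prop :=
  ∀ κ' ≤ κ, ∀ x : Fin κ' → U, Function.Injective x → ∀ a : Fin κ' → α,
    #{i | ∀ t, F i (x t) = a t} * Fintype.card α ^ κ' = Fintype.card ι

/-- A family `H` of functions, indexed with multiplicity by `ι`, is universal: for a uniformly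
random index, two distinct points collide with probability at most `1 / |α|`. -/
def IsUniversal (H : ι → U → α) : Prop :=
  ∀ x y, x ≠ y → #{i | H i x = H i y} * Fintype.card α ≤ Fintype.card ι

namespace IsKWiseIndependent

variable {F : ι → U → α} {j κ : ℕ}

theorem mono (hF : IsKWiseIndependent κ F) (h : j ≤ κ) : IsKWiseIndependent j F :=
  fun κ' hκ' => hF κ' (hκ'.trans h)

theorem card_forall_mem_eq_mul_pow (hF : IsKWiseIndependent κ F) {T : Finset U} (hT : #T ≤ κ)
    (a : α) : #{i | ∀ x ∈ T, F i x = a} * Fintype.card α ^ #T = Fintype.card ι := by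
  let e := T.equivFin.symm
  rw [← hF #T hT (fun t => e t) (Subtype.val_injective.comp e.injective) fun _ => a]
  congr 3
  ext i
  rw [e.forall_congr_left (p := fun t => F i (e t) = a)]
  simp

-- Double count the pairs of an index `i` and a `j`-subset of `S` in the fibre of `F i` over `a`.
theorem card_le_fiber_mul_choose_le (hF : IsKWiseIndependent j F) (S : Finset U) (a : α)
    (t : ℕ) :
    #{i | t ≤ #{x ∈ S | F i x = a}} * t.choose j * Fintype.card α ^ j ≤
      (#S).choose j * Fintype.card ι := by
  have choose_le_card (i : ι) (hi : t ≤ #{x ∈ S | F i x = a}) :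
      t.choose j ≤ #{T ∈ S.powersetCard j | ∀ x ∈ T, F i x = a} := by
    refine (Nat.choose_le_choose j hi).trans ?_
    rw [← card_powersetCard]
    refine card_le_card fun T hT => ?_
    obtain ⟨hsub, hcard⟩ := mem_powersetCard.1 hT
    exact mem_filter.2 ⟨mem_powersetCard.2 ⟨hsub.trans (filter_subset _ _), hcard⟩,
      fun x hx => (mem_filter.1 (hsub hx)).2⟩
  calc #{i | t ≤ #{x ∈ S | F i x = a}} * t.choose j * Fintype.card α ^ j
      ≤ (∑ i, #{T ∈ S.powersetCard j | ∀ x ∈ T, F i x = a}) * Fintype.card α ^ j := by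
        gcongr
        exact card_filter_mul_le_sum choose_le_card
    _ = ∑ T ∈ S.powersetCard j, #{i | ∀ x ∈ T, F i x = a} * Fintype.card α ^ j := by
        rw [← sum_mul]
        congr 1
        exact sum_card_bipartiteAbove_eq_sum_card_bipartiteBelow fun i T => ∀ x ∈ T, F i x = a
    _ = ∑ _ ∈ S.powersetCard j, Fintype.card ι := by
        refine sum_congr rfl fun T hT => ?_
        obtain rfl := (mem_powersetCard.1 hT).2
        exact hF.card_forall_mem_eq_mul_pow le_rfl a
    _ = (#S).choose j * Fintype.card ι := by
        rw [sum_const, card_powersetCard, smul_eq_mul]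

theorem card_le_fiber_mul_descFactorial_le (hF : IsKWiseIndependent j F) (S : Finset U) (a : α)
    (t : ℕ) :
    #{i | t ≤ #{x ∈ S | F i x = a}} * t.descFactorial j * Fintype.card α ^ j ≤
      #S ^ j * Fintype.card ι := by
  calc #{i | t ≤ #{x ∈ S | F i x = a}} * t.descFactorial j * Fintype.card α ^ j
      = j.factorial *
          (#{i | t ≤ #{x ∈ S | F i x = a}} * t.choose j * Fintype.card α ^ j) := by
        rw [Nat.descFactorial_eq_factorial_mul_choose]
        ring
    _ ≤ j.factorial * ((#S).choose j * Fintype.card ι) :=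
        Nat.mul_le_mul_left _ (hF.card_le_fiber_mul_choose_le S a t)
    _ = (#S).descFactorial j * Fintype.card ι := by
        rw [Nat.descFactorial_eq_factorial_mul_choose, mul_assoc]
    _ ≤ #S ^ j * Fintype.card ι := Nat.mul_le_mul_right _ (Nat.descFactorial_le_pow _ _)

-- `μ` bounds the expected size of a fibre.
theorem card_le_fiber_mul_pow_le (hF : IsKWiseIndependent j F) {S : Finset U} {μ c : ℝ}
    (hμ : 0 < μ) (hc : 0 ≤ c) (hS : #S ≤ Fintype.card α * μ) {t : ℕ} (ht : c * μ + j ≤ t + 1)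
    (a : α) : #{i | t ≤ #{x ∈ S | F i x = a}} * c ^ j ≤ Fintype.card ι := by
  have : Nonempty α := ⟨a⟩
  have hα : (0 : ℝ) < Fintype.card α := by exact_mod_cast Fintype.card_pos
  refine le_of_mul_le_mul_right ?_ (pow_pos (mul_pos hα hμ) j)
  calc #{i | t ≤ #{x ∈ S | F i x = a}} * c ^ j * (Fintype.card α * μ) ^ j
      = #{i | t ≤ #{x ∈ S | F i x = a}} * (c * μ) ^ j * Fintype.card α ^ j := by
        rw [mul_pow, mul_pow]
        ring
    _ ≤ #{i | t ≤ #{x ∈ S | F i x = a}} * t.descFactorial j * Fintype.card α ^ j := by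
        gcongr
        exact pow_le_descFactorial (by positivity) ht
    _ ≤ #S ^ j * Fintype.card ι := by
        exact_mod_cast hF.card_le_fiber_mul_descFactorial_le S a t
    _ ≤ (Fintype.card α * μ) ^ j * Fintype.card ι := by gcongr
    _ = Fintype.card ι * (Fintype.card α * μ) ^ j := mul_comm _ _

theorem card_overfull_mul_pow_four_le {k : ℕ} (hk : 2 ≤ k)
    (hF : IsKWiseIndependent ⌈4 * Real.log k⌉₊ F) (hα : k / Real.log k ≤ Fintype.card α)
    {S : Finset U} (hS : #S = k) (a : α) :
    #{i | ⌈13 * Real.log k⌉₊ ≤ #{x ∈ S | F i x = a}} * k ^ 4 ≤ Fintype.card ι := by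
  have hlog : 0 < Real.log k := Real.log_pos (by exact_mod_cast hk)
  have hload : (#S : ℝ) ≤ Fintype.card α * Real.log k := hS ▸ (div_le_iff₀ hlog).1 hα
  have hthreshold : 9 * Real.log k + ⌈4 * Real.log k⌉₊ ≤ (⌈13 * Real.log k⌉₊ : ℝ) + 1 := by
    linarith [Nat.ceil_lt_add_one (show 0 ≤ 4 * Real.log k by positivity),
      Nat.le_ceil (13 * Real.log k)]
  have hlog_nine : 1 ≤ Real.log 9 :=
    (Real.le_log_iff_exp_le (by norm_num)).2 (by linarith [Real.exp_one_lt_d9])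
  have hpow : (k : ℝ) ^ 4 ≤ 9 ^ ⌈4 * Real.log k⌉₊ :=
    pow_le_pow_of_mul_log_le (by positivity) (by norm_num)
      ((Nat.le_ceil _).trans (le_mul_of_one_le_right (by positivity) hlog_nine))
  have htail := hF.card_le_fiber_mul_pow_le hlog (by norm_num) hload hthreshold a
  exact_mod_cast (mul_le_mul_of_nonneg_left hpow (by positivity)).trans htail

end IsKWiseIndependent

namespace IsUniversal

variable {H : ι → U → α}

theorem two_mul_card_not_injOn_mul_le (hH : IsUniversal H) (T : Finset U) :
    2 * #{i | ¬ Set.InjOn (H i) T} * Fintype.card α ≤ #T.offDiag * Fintype.card ι := by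
  have two_le (i : ι) (hi : ¬ Set.InjOn (H i) T) :
      2 ≤ #{p ∈ T.offDiag | H i p.1 = H i p.2} := by
    simp only [Set.InjOn, not_forall] at hi
    obtain ⟨x, hx, y, hy, hxy, hne⟩ := hi
    have hpair : (x, y) ≠ (y, x) := fun h => hne (congrArg Prod.fst h)
    rw [← card_pair hpair]
    refine card_le_card (insert_subset ?_ (singleton_subset_iff.2 ?_))
    · exact mem_filter.2 ⟨mem_offDiag.2 ⟨hx, hy, hne⟩, hxy⟩
    · exact mem_filter.2 ⟨mem_offDiag.2 ⟨hy, hx, Ne.symm hne⟩, hxy.symm⟩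
  calc 2 * #{i | ¬ Set.InjOn (H i) T} * Fintype.card α
      ≤ (∑ i, #{p ∈ T.offDiag | H i p.1 = H i p.2}) * Fintype.card α := by
        rw [mul_comm 2]
        gcongr
        exact card_filter_mul_le_sum two_le
    _ = ∑ p ∈ T.offDiag, #{i | H i p.1 = H i p.2} * Fintype.card α := by
        rw [← sum_mul]
        congr 1
        exact sum_card_bipartiteAbove_eq_sum_card_bipartiteBelow
          fun i (p : U × U) => H i p.1 = H i p.2
    _ ≤ #T.offDiag * Fintype.card ι :=
        sum_le_card_nsmul _ _ _ fun p hp => hH _ _ (mem_offDiag.1 hp).2.2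

theorem two_mul_card_not_injOn_le (hH : IsUniversal H) {T : Finset U}
    (hT : #T ^ 2 ≤ Fintype.card α) :
    2 * #{i | ¬ Set.InjOn (H i) T} ≤ Fintype.card ι := by
  obtain rfl | hne := T.eq_empty_or_nonempty
  · simp
  refine Nat.le_of_mul_le_mul_right ?_ ((pow_pos hne.card_pos 2).trans_le hT)
  calc 2 * #{i | ¬ Set.InjOn (H i) T} * Fintype.card α
      ≤ #T.offDiag * Fintype.card ι := hH.two_mul_card_not_injOn_mul_le T
    _ ≤ Fintype.card α * Fintype.card ι := by
        gcongr
        rw [offDiag_card]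
        exact (Nat.sub_le _ _).trans (by rwa [← sq])
    _ = Fintype.card ι * Fintype.card α := mul_comm _ _

theorem card_forall_not_injOn_mul_two_pow_le (hH : IsUniversal H) {T : Finset U}
    (hT : #T ^ 2 ≤ Fintype.card α) (n : ℕ) :
    #{g : Fin n → ι | ∀ t, ¬ Set.InjOn (H (g t)) T} * 2 ^ n ≤ Fintype.card (Fin n → ι) := by
  rw [card_filter_forall_apply fun i => ¬ Set.InjOn (H i) T, ← mul_pow, mul_comm,
    Fintype.card_fun, Fintype.card_fin]
  exact Nat.pow_le_pow_left (hH.two_mul_card_not_injOn_le hT) n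

theorem card_forall_not_injOn_mul_pow_four_le (hH : IsUniversal H) {T : Finset U}
    (hT : #T ^ 2 ≤ Fintype.card α) {k n : ℕ} (hk : 0 < k) (hn : 8 * Real.log k ≤ n) :
    #{g : Fin n → ι | ∀ t, ¬ Set.InjOn (H (g t)) T} * k ^ 4 ≤ Fintype.card (Fin n → ι) := by
  have hpow : (k : ℝ) ^ 4 ≤ 2 ^ n :=
    pow_le_pow_of_mul_log_le (by positivity) two_pos (by
      push_cast
      nlinarith [Real.log_two_gt_d9])
  exact (Nat.mul_le_mul_left _ (by exact_mod_cast hpow)).trans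
    (hH.card_forall_not_injOn_mul_two_pow_le hT n)

end IsUniversal

end HashFamilies

section HashScheme

variable {U : Type*} {d₁ d₂ d₃ : ℕ}

section Fixed

variable {f : U → Fin d₁} {h : Fin d₂ → U → Fin d₃}

theorem hashPlus_eq_finProdFinEquiv (i : Fin d₂) (x : U) :
    hashPlus d₂ d₃ f h i x = finProdFinEquiv (f x, finProdFinEquiv (i, h i x)) := by
  simp only [hashPlus, finProdFinEquiv_apply_val]
  ring

theorem hashPlus_lt (i : Fin d₂) (x : U) : hashPlus d₂ d₃ f h i x < d₁ * d₂ * d₃ := by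
  rw [hashPlus_eq_finProdFinEquiv, mul_assoc]
  exact Fin.is_lt _

theorem hashPlus_eq_hashPlus_iff {i i' : Fin d₂} {x x' : U} :
    hashPlus d₂ d₃ f h i x = hashPlus d₂ d₃ f h i' x' ↔
      f x = f x' ∧ i = i' ∧ h i x = h i' x' := by
  simp only [hashPlus_eq_finProdFinEquiv, Fin.val_inj, EmbeddingLike.apply_eq_iff_eq,
    Prod.mk.injEq]

/-- The success event of the hashing scheme: there are `k` hash values below `d₁ * d₂ * d₃` whose
preimages under the combined hash functions are pairwise disjoint and each contain exactly one
element of `S`. -/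
def Isolates (k : ℕ) (f : U → Fin d₁) (h : Fin d₂ → U → Fin d₃) (S : Finset U) : Prop :=
  ∃ q : Fin k → ℕ, (∀ t, q t < d₁ * d₂ * d₃) ∧
    (∀ t t', t ≠ t' → Disjoint {x : U | ∃ i, hashPlus d₂ d₃ f h i x = q t}
      {x : U | ∃ i, hashPlus d₂ d₃ f h i x = q t'}) ∧
    (∀ t, #{x ∈ S | ∃ i, hashPlus d₂ d₃ f h i x = q t} = 1)

theorem isolates_of_forall_exists_injOn {k : ℕ} {S : Finset U} (hS : #S = k)
    (hinj : ∀ a, ∃ i, Set.InjOn (h i) ({x ∈ S | f x = a} : Finset U)) : Isolates k f h S := by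
  choose c hc using hinj
  let e := (S.equivFinOfCardEq hS).symm
  let q (x : U) : ℕ := hashPlus d₂ d₃ f h (c (f x)) x
  have hq {y : U} {i : Fin d₂} {x : U} (hy : hashPlus d₂ d₃ f h i y = q x) :
      f y = f x ∧ h (c (f x)) y = h (c (f x)) x := by
    obtain ⟨hf, rfl, hh⟩ := hashPlus_eq_hashPlus_iff.1 hy
    exact ⟨hf, hh⟩
  have hcell {x y : U} (hx : x ∈ S) (hy : y ∈ S) (hf : f x = f y)
      (hh : h (c (f y)) x = h (c (f y)) y) : x = y :=
    hc (f y) (by simp [hx, hf]) (by simp [hy]) hh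
  refine ⟨fun t => q (e t), fun t => hashPlus_lt _ _, fun t t' hne => ?_, fun t => ?_⟩
  · rw [Set.disjoint_left]
    rintro y ⟨i, hi⟩ ⟨i', hi'⟩
    obtain ⟨hf, hh⟩ := hq hi
    obtain ⟨hf', hh'⟩ := hq hi'
    have hff : f (e t) = f (e t') := hf.symm.trans hf'
    rw [hff] at hh
    exact hne (e.injective (Subtype.ext (hcell (e t).2 (e t').2 hff (hh.symm.trans hh'))))
  · refine card_eq_one.2 ⟨e t, ?_⟩
    ext y
    simp only [mem_filter, mem_singleton]
    constructor
    · rintro ⟨hy, i, hi⟩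
      exact hcell hy (e t).2 (hq hi).1 (hq hi).2
    · rintro rfl
      exact ⟨(e t).2, _, rfl⟩

end Fixed

variable {ιf ιh : Type*} [Fintype ιf] [Fintype ιh] {k : ℕ} {F : ιf → U → Fin d₁}
  {H : ιh → U → Fin d₃} {S : Finset U}

theorem card_bucket_not_injOn_mul_pow_four_le (hk : 2 ≤ k) (hd₁ : k / Real.log k ≤ (d₁ : ℝ))
    (hd₂ : 8 * Real.log k ≤ d₂) (hd₃ : ⌈13 * Real.log k⌉₊ ^ 2 ≤ d₃)
    (hF : IsKWiseIndependent ⌈4 * Real.log k⌉₊ F) (hH : IsUniversal H) (hS : #S = k)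
    (a : Fin d₁) :
    #{ω : ιf × (Fin d₂ → ιh) |
        ∀ i, ¬ Set.InjOn (H (ω.2 i)) ({x ∈ S | F ω.1 x = a} : Finset U)} * k ^ 4 ≤
      2 * Fintype.card (ιf × (Fin d₂ → ιh)) := by
  set m := ⌈13 * Real.log k⌉₊
  let T (j : ιf) : Finset U := {x ∈ S | F j x = a}
  have hoverfull : #{ω : ιf × (Fin d₂ → ιh) | m ≤ #(T ω.1)} * k ^ 4 ≤
      Fintype.card (ιf × (Fin d₂ → ιh)) :=
    card_filter_fst_mul_le (p := fun j => m ≤ #(T j))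
      (hF.card_overfull_mul_pow_four_le hk (by simpa using hd₁) hS a)
  have hcolliding :
      #{ω : ιf × (Fin d₂ → ιh) | #(T ω.1) < m ∧ ∀ i, ¬ Set.InjOn (H (ω.2 i)) (T ω.1)} * k ^ 4 ≤
        Fintype.card (ιf × (Fin d₂ → ιh)) := by
    refine card_filter_prod_mul_le
      (p := fun j (g : Fin d₂ → ιh) => #(T j) < m ∧ ∀ i, ¬ Set.InjOn (H (g i)) (T j)) fun j => ?_
    by_cases hj : #(T j) < m
    · have hT : #(T j) ^ 2 ≤ Fintype.card (Fin d₃) := by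
        rw [Fintype.card_fin]
        exact (Nat.pow_le_pow_left hj.le 2).trans hd₃
      simpa only [hj, true_and] using
        hH.card_forall_not_injOn_mul_pow_four_le hT (by lia) hd₂
    · simp [hj]
  rw [two_mul]
  refine le_trans ?_ (Nat.add_le_add hoverfull hcolliding)
  rw [← add_mul]
  refine Nat.mul_le_mul_right _ ((card_le_card fun ω hω => ?_).trans (card_union_le _ _))
  simp only [mem_union, mem_filter_univ] at hω ⊢
  exact (le_or_gt m #(T ω.1)).imp_right fun hlt => ⟨hlt, hω⟩

theorem card_not_isolates_mul_pow_four_le (hk : 2 ≤ k) (hd₁ : k / Real.log k ≤ (d₁ : ℝ))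
    (hd₂ : 8 * Real.log k ≤ d₂) (hd₃ : ⌈13 * Real.log k⌉₊ ^ 2 ≤ d₃)
    (hF : IsKWiseIndependent ⌈4 * Real.log k⌉₊ F) (hH : IsUniversal H) (hS : #S = k) :
    #{ω : ιf × (Fin d₂ → ιh) | ¬ Isolates k (F ω.1) (fun i => H (ω.2 i)) S} * k ^ 4 ≤
      d₁ * (2 * Fintype.card (ιf × (Fin d₂ → ιh))) := by
  have hunion := card_filter_exists_mul_le
    (card_bucket_not_injOn_mul_pow_four_le hk hd₁ hd₂ hd₃ hF hH hS)
  rw [Fintype.card_fin] at hunion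
  refine (Nat.mul_le_mul_right _ (card_le_card fun ω hω => ?_)).trans hunion
  rw [mem_filter_univ] at hω ⊢
  contrapose! hω
  exact isolates_of_forall_exists_injOn hS hω

theorem stmt8_general {κ : ℕ} (hk : 2 ≤ k) (hd₁ : k / Real.log k ≤ (d₁ : ℝ))
    (hd₁' : (d₁ : ℝ) ≤ 2 * (k / Real.log k)) (hd₂ : 8 * Real.log k ≤ d₂)
    (hd₃ : ⌈13 * Real.log k⌉₊ ^ 2 ≤ d₃) (hκ : 4 * Real.log k ≤ κ) (hF : IsKWiseIndependent κ F)
    (hH : IsUniversal H) (hS : #S = k) :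
    (1 - 4 / ((k : ℝ) ^ 3 * Real.log k)) * (Fintype.card (ιf × (Fin d₂ → ιh)) : ℝ) ≤
      #{ω : ιf × (Fin d₂ → ιh) | Isolates k (F ω.1) (fun i => H (ω.2 i)) S} := by
  set N := Fintype.card (ιf × (Fin d₂ → ιh))
  set good := #{ω : ιf × (Fin d₂ → ιh) | Isolates k (F ω.1) (fun i => H (ω.2 i)) S}
  set bad := #{ω : ιf × (Fin d₂ → ιh) | ¬ Isolates k (F ω.1) (fun i => H (ω.2 i)) S}
  have hlog : 0 < Real.log k := Real.log_pos (by exact_mod_cast hk)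
  have hsplit : (good : ℝ) + bad = N := by
    exact_mod_cast card_filter_add_card_filter_not
      (s := (univ : Finset (ιf × (Fin d₂ → ιh)))) _
  have hcount : (bad : ℝ) * k ^ 4 ≤ d₁ * (2 * N) := by
    exact_mod_cast card_not_isolates_mul_pow_four_le hk hd₁ hd₂ hd₃
      (hF.mono (Nat.ceil_le.2 hκ)) hH hS
  have hbad : (bad : ℝ) ≤ 4 / ((k : ℝ) ^ 3 * Real.log k) * N :=
    calc (bad : ℝ) ≤ d₁ * (2 * N) / k ^ 4 := (le_div_iff₀ (by positivity)).2 hcount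
      _ ≤ 2 * (k / Real.log k) * (2 * N) / k ^ 4 := by gcongr
      _ = 4 / ((k : ℝ) ^ 3 * Real.log k) * N := by
        field_simp
        ring
  linarith

end HashScheme

/-- in HashScheme(U,k) — `f` drawn u.a.r. from a `⌈12 ln k⌉`-wise independent
family into `{0,…,d₁−1}` (`d₁` the smallest power of two with `k/ln k ≤ d₁`), and
`h₁,…,h_{d₂}` drawn independently u.a.r. from a universal family into `{0,…,d₃−1}`
with `d₂ = ⌈8 ln k⌉`, `d₃ = ⌈13 ln k⌉²` — for any `S ⊆ U` with `|S| = k ≥ 2`, with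
probability at least `1 − 4/(k³ ln k)` there exist `k` values `q₁,…,q_k` whose preimage
sets `H⁺_inv(qₜ) = {x : ∃ i, hᵢ⁺(x) = qₜ}` are pairwise disjoint and each contains
exactly one element of `S`. -/
theorem stmt8 {U ιf ιh : Type*} [Fintype U] [DecidableEq U] [Fintype ιf] [Fintype ιh]
    (k d d₁ d₂ d₃ : ℕ) (hk : 2 ≤ k)
    (hd₂ : d₂ = ⌈8 * Real.log k⌉₊) (hd₃ : d₃ = ⌈13 * Real.log k⌉₊ ^ 2)
    (hd₁ : d₁ = 2 ^ d) (hlow : (k : ℝ) / Real.log k ≤ (d₁ : ℝ))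
    (hmin : ∀ d' : ℕ, d' < d → ((2 : ℝ) ^ d' < (k : ℝ) / Real.log k))
    (F : ιf → U → Fin d₁)
    (hF : ∀ κ' ≤ ⌈12 * Real.log k⌉₊, ∀ x : Fin κ' → U, Function.Injective x →
      ∀ a : Fin κ' → Fin d₁,
        ((Finset.univ : Finset ιf).filter (fun i => ∀ t, F i (x t) = a t)).card * d₁ ^ κ'
          = Fintype.card ιf)
    (Hh : ιh → U → Fin d₃)
    (huniv : ∀ x y : U, x ≠ y →
      ((Finset.univ : Finset ιh).filter (fun i => Hh i x = Hh i y)).card * d₃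
        ≤ Fintype.card ιh)
    (S : Finset U) (hS : S.card = k) :
    (1 - 4 / ((k : ℝ) ^ 3 * Real.log k)) * (Fintype.card (ιf × (Fin d₂ → ιh)) : ℝ) ≤
      (((Finset.univ : Finset (ιf × (Fin d₂ → ιh))).filter (fun ω =>
        ∃ q : Fin k → ℕ, (∀ t, q t < d₁ * d₂ * d₃) ∧
          (∀ t t', t ≠ t' →
            Disjoint {x : U | ∃ i, hashPlus d₂ d₃ (F ω.1) (fun i' => Hh (ω.2 i')) i x = q t}
              {x : U | ∃ i, hashPlus d₂ d₃ (F ω.1) (fun i' => Hh (ω.2 i')) i x = q t'}) ∧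
          (∀ t, (S.filter (fun x =>
              ∃ i, hashPlus d₂ d₃ (F ω.1) (fun i' => Hh (ω.2 i')) i x = q t)).card = 1))).card
        : ℝ) := by
  have hd₁' : (d₁ : ℝ) ≤ 2 * (k / Real.log k) := by
    simpa [hd₁] using two_pow_le_two_mul (one_le_div_log (by exact_mod_cast hk)) hmin
  have hκ : 4 * Real.log k ≤ ⌈12 * Real.log k⌉₊ := by
    linarith [Nat.le_ceil (12 * Real.log k), Real.log_natCast_nonneg k]
  exact stmt8_general hk hlow hd₁' (hd₂ ▸ Nat.le_ceil _) hd₃.ge hκ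
    (by simpa [IsKWiseIndependent] using hF) (by simpa [IsUniversal] using huniv) hS
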